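/- For n ≥ 4 and the norm ‖x‖_P = max_{i≠j}(|x_i|+|x_j|) on ℝⁿ (unit ball the Voronoï region of D_n), m₁(ℝⁿ, ‖·‖_P) ≤ 1/((3/4)·2ⁿ + n − 1). -/

import Mathlib

open MeasureTheory Filter Set Pointwise

noncomputable def box (n : ℕ) (R : ℝ) : Set (Fin n → ℝ) := {x | ∀ i, |x i| ≤ R}

noncomputable def density (n : ℕ) (A : Set (Fin n → ℝ)) : ℝ :=
  Filter.limsup (fun R : ℝ =>
    (volume (A ∩ box n R)).toReal / (volume (box n R)).toReal) Filter.atTop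

def AvoidsOne (n : ℕ) (N : (Fin n → ℝ) → ℝ) (A : Set (Fin n → ℝ)) : Prop :=
  ∀ x ∈ A, ∀ y ∈ A, N (x - y) ≠ 1

noncomputable def m1 (n : ℕ) (N : (Fin n → ℝ) → ℝ) : ℝ :=
  sSup {d : ℝ | ∃ A : Set (Fin n → ℝ), MeasurableSet A ∧ AvoidsOne n N A ∧ d = density n A}

noncomputable def polyNorm (n : ℕ) (P : Set (Fin n → ℝ)) (x : Fin n → ℝ) : ℝ :=
  sInf {l : ℝ | 0 ≤ l ∧ x ∈ l • P}

def IsSymmPolytope (n : ℕ) (P : Set (Fin n → ℝ)) : Prop :=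
  Convex ℝ P ∧ (∀ x ∈ P, -x ∈ P) ∧ ∃ F : Finset (Fin n → ℝ), P = convexHull ℝ (↑F : Set (Fin n → ℝ))

def TilesBy (n : ℕ) (P : Set (Fin n → ℝ)) (Λ : Set (Fin n → ℝ)) : Prop :=
  (⋃ l ∈ Λ, (l +ᵥ P)) = Set.univ ∧
  (Λ.Pairwise fun a b => interior (a +ᵥ P) ∩ interior (b +ᵥ P) = ∅)

/-- The norm `‖x‖ = max_{i ≠ j} (|xᵢ| + |xⱼ|)`, whose unit ball is the Voronoï
region of the lattice `Dₙ`. -/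
noncomputable def DnNorm (n : ℕ) (x : Fin n → ℝ) : ℝ :=
  sSup {r : ℝ | ∃ i j, i ≠ j ∧ r = |x i| + |x j|}

/-!
On half the dual lattice of `D_n` the norm takes values in `½ℤ`. Let `S` be the set of its vectors
of norm at most `½`. A sum of two vectors of `S` has norm at most `½` or exactly `1`, so if `A`
avoids distance `1`, then points of `A` differing by an element of `S + S` already differ by an
element of `S`. Thus `A` falls apart into clusters `C`, with `C - C ⊆ S`, whose neighbourhoods
`C + S` are pairwise disjoint. Spreading the mass of each cluster evenly over its neighbourhood
shows that the density of `A` is at most the maximum of `|C| / |C + S|`.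

Scale by four, so that the lattice consists of the integer vectors with entries of equal parity
and `S` of `0`, the `± 2 eₖ` and the `2 ^ n` vertices of the cube `[-1, 1]ⁿ`. Split a cluster by
parity into `E` and `O`. Each part has at most two points, and two points differ by some `± 2 eₖ`,
so the cubes around `O` have at least `¾ 2 ^ n |O|` vertices. These have the parity of `E`, and so
do the `e ± 2 eⱼ` for `e ∈ E`, of which at least `(n - 1) |E|` are not among them. Adding the same
bound with `E` and `O` exchanged gives `|C + S| ≥ (¾ 2 ^ n + n - 1) |C|`.
-/

open scoped Finset ENNReal

section MassTransport

variable {G : Type*}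

theorem mul_measure_le_measure_add_of_sum_le_one [AddGroup G] [MeasurableSpace G]
    [MeasurableAdd G] (μ : Measure G) [μ.IsAddRightInvariant] {T : Finset G} {w : G → G → ℝ≥0∞}
    (hw : ∀ t ∈ T, Measurable (w t)) {A : Set G} (hA : MeasurableSet A) {κ : ℝ≥0∞}
    (sent : ∀ a ∈ A, κ ≤ ∑ t ∈ T, w t a) (received : ∀ y, ∑ t ∈ T, A.indicator (w t) (y - t) ≤ 1) :
    κ * μ A ≤ μ (A + T) := by
  have hAT : MeasurableSet (A + (T : Set G)) := by
    rw [← iUnion_add_right_image]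
    refine T.measurableSet_biUnion fun t _ ↦ ?_
    simpa only [image_add_right] using measurable_add_const (-t) hA
  have received_of_notMem : ∀ y ∉ A + (T : Set G), ∑ t ∈ T, A.indicator (w t) (y - t) = 0 :=
    fun y hy ↦ Finset.sum_eq_zero fun t ht ↦ indicator_of_notMem
      (fun h ↦ hy ⟨y - t, h, t, ht, sub_add_cancel y t⟩) _
  calc κ * μ A
      = ∫⁻ _ in A, κ ∂μ := (setLIntegral_const A κ).symm
    _ ≤ ∫⁻ a in A, ∑ t ∈ T, w t a ∂μ := setLIntegral_mono' hA sent
    _ = ∑ t ∈ T, ∫⁻ a, A.indicator (w t) a ∂μ := by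
      rw [lintegral_finsetSum' _ fun t ht ↦ (hw t ht).aemeasurable]
      simp only [lintegral_indicator hA]
    _ = ∑ t ∈ T, ∫⁻ y, A.indicator (w t) (y - t) ∂μ :=
      Finset.sum_congr rfl fun t _ ↦ (lintegral_sub_right_eq_self _ t).symm
    _ = ∫⁻ y, ∑ t ∈ T, A.indicator (w t) (y - t) ∂μ := by
      refine (lintegral_finsetSum' _ fun t ht ↦ Measurable.aemeasurable ?_).symm
      simp only [sub_eq_add_neg]
      exact ((hw t ht).indicator hA).comp (measurable_add_const (-t))
    _ ≤ ∫⁻ y, (A + (T : Set G)).indicator 1 y ∂μ := by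
      refine lintegral_mono fun y ↦ ?_
      by_cases hy : y ∈ A + (T : Set G)
      · simpa only [indicator_of_mem hy, Pi.one_apply] using received y
      · simp only [received_of_notMem y hy, zero_le]
    _ = μ (A + T) := lintegral_indicator_one hAT

variable [AddCommGroup G] {S : Finset G} {A : Set G}

/-- Two points of `A` with a common `S`-neighbour are themselves `S`-neighbours. For symmetric `S`
containing `0` this makes `a - b ∈ S` an equivalence relation on `A`, whose classes ("clusters")
have pairwise disjoint `S`-neighbourhoods. -/
def IsClustered [DecidableEq G] (S : Finset G) (A : Set G) : Prop :=
  ∀ a ∈ A, ∀ b ∈ A, a - b ∈ S + S → a - b ∈ S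

open scoped Classical in
/-- The cluster of `a` in an `S`-clustered set `A`, translated so that `a` becomes the origin. -/
noncomputable def clusterAt (S : Finset G) (A : Set G) (a : G) : Finset G := {s ∈ S | a + s ∈ A}

lemma mem_clusterAt {a s : G} : s ∈ clusterAt S A a ↔ s ∈ S ∧ a + s ∈ A := by
  simp only [clusterAt, Finset.mem_filter]

lemma clusterAt_subset (a : G) : clusterAt S A a ⊆ S :=
  fun _ hs ↦ (mem_clusterAt.1 hs).1

lemma measurable_comp_clusterAt [MeasurableSpace G] [MeasurableAdd G] (hA : MeasurableSet A)
    (S : Finset G) (g : Finset G → ℝ≥0∞) : Measurable fun a ↦ g (clusterAt S A a) := by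
  classical
  let pattern (a : G) (s : S) : Prop := a + s ∈ A
  have hpattern : Measurable pattern :=
    measurable_pi_lambda _ fun s ↦ measurableSet_setOfPred.1 (measurable_add_const (s : G) hA)
  let decode (p : S → Prop) : Finset G := (Finset.univ.filter p).map (.subtype _)
  have hdecode : clusterAt S A = decode ∘ pattern := by
    ext a s
    simp [mem_clusterAt, decode, pattern, and_comm]
  rw [show (fun a ↦ g (clusterAt S A a)) = (g ∘ decode) ∘ pattern by rw [hdecode]; rfl]
  exact (Measurable.of_discrete (f := g ∘ decode)).comp hpattern

variable [DecidableEq G]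

/-- The mass that `a` sends to `a + t` when each point of `A` spreads its mass over the
`S`-neighbourhood of its cluster, at density one over the size of the cluster. -/
noncomputable def clusterWeight (S : Finset G) (A : Set G) (t a : G) : ℝ≥0∞ :=
  if t ∈ clusterAt S A a + S then (#(clusterAt S A a) : ℝ≥0∞)⁻¹ else 0

lemma sum_clusterWeight (S : Finset G) (A : Set G) (a : G) :
    ∑ t ∈ S + S, clusterWeight S A t a =
      #(clusterAt S A a + S) * (#(clusterAt S A a) : ℝ≥0∞)⁻¹ := by
  have hsub : clusterAt S A a + S ⊆ S + S := Finset.add_subset_add_right (clusterAt_subset a)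
  simp only [clusterWeight, ← Finset.sum_filter, Finset.filter_mem_eq_inter,
    Finset.inter_eq_right.2 hsub, Finset.sum_const, nsmul_eq_mul]

lemma IsClustered.clusterAt_sub_clusterAt_subset (hA : IsClustered S A) (neg_mem : ∀ s ∈ S, -s ∈ S)
    (a : G) : clusterAt S A a - clusterAt S A a ⊆ S := by
  rw [Finset.sub_subset_iff]
  intro u hu v hv
  rw [mem_clusterAt] at hu hv
  rw [← add_sub_add_left_eq_sub u v a]
  refine hA _ hu.2 _ hv.2 ?_
  rw [add_sub_add_left_eq_sub, sub_eq_add_neg]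
  exact Finset.add_mem_add hu.1 (neg_mem v hv.1)

lemma IsClustered.sub_mem_of_mem_clusterAt_add (hA : IsClustered S A) (neg_mem : ∀ s ∈ S, -s ∈ S)
    {y t t' : G} (ht : y - t ∈ A) (ht' : y - t' ∈ A)
    (hy : t ∈ clusterAt S A (y - t) + S) (hy' : t' ∈ clusterAt S A (y - t') + S) :
    t - t' ∈ S := by
  obtain ⟨s, hs, r, hr, rfl⟩ := Finset.mem_add.1 hy
  obtain ⟨s', hs', r', hr', rfl⟩ := Finset.mem_add.1 hy'
  rw [mem_clusterAt] at hs hs'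
  -- `y - r` and `y - r'` are the members of the two clusters that are `S`-adjacent to `y`.
  have near : r - r' ∈ S := by
    have h := hA _ hs'.2 _ hs.2
    rw [show y - (s' + r') + s' - (y - (s + r) + s) = r - r' by abel] at h
    exact h (by simpa only [sub_eq_add_neg] using Finset.add_mem_add hr (neg_mem r' hr'))
  have half : s + r - r' ∈ S := by
    have h := hA _ hs'.2 _ ht
    rw [show y - (s' + r') + s' - (y - (s + r)) = s + (r - r') by abel, ← add_sub_assoc] at h
    exact h (by simpa only [add_sub_assoc] using Finset.add_mem_add hs.1 near)
  have h := hA _ ht' _ ht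
  rw [show y - (s' + r') - (y - (s + r)) = s + r - r' + -s' by abel] at h
  rw [show s + r - (s' + r') = s + r - r' + -s' by abel]
  exact h (Finset.add_mem_add half (neg_mem s' hs'.1))

lemma IsClustered.sum_indicator_clusterWeight_le_one (hA : IsClustered S A)
    (neg_mem : ∀ s ∈ S, -s ∈ S) (T : Finset G) (y : G) :
    ∑ t ∈ T, A.indicator (clusterWeight S A t) (y - t) ≤ 1 := by
  classical
  set B : Finset G := {t ∈ T | y - t ∈ A ∧ t ∈ clusterAt S A (y - t) + S} with hB
  have card_le : ∀ t ∈ B, #B ≤ #(clusterAt S A (y - t)) := by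
    intro t ht
    refine Finset.card_le_card_of_injOn (t - ·) (fun t' ht' ↦ ?_) sub_right_injective.injOn
    obtain ⟨-, hyt, ht⟩ := Finset.mem_filter.1 ht
    obtain ⟨-, hyt', ht'⟩ := Finset.mem_filter.1 ht'
    refine mem_clusterAt.2 ⟨hA.sub_mem_of_mem_clusterAt_add neg_mem hyt hyt' ht ht', ?_⟩
    rwa [sub_add_sub_cancel]
  calc ∑ t ∈ T, A.indicator (clusterWeight S A t) (y - t)
      = ∑ t ∈ B, (#(clusterAt S A (y - t)) : ℝ≥0∞)⁻¹ := by
        simp only [hB, Finset.sum_filter, indicator_apply, clusterWeight, ite_and]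
    _ ≤ ∑ _t ∈ B, (#B : ℝ≥0∞)⁻¹ :=
        Finset.sum_le_sum fun t ht ↦ ENNReal.inv_le_inv.2 (Nat.cast_le.2 (card_le t ht))
    _ = #B * (#B : ℝ≥0∞)⁻¹ := by rw [Finset.sum_const, nsmul_eq_mul]
    _ ≤ 1 := ENNReal.mul_inv_le_one _

theorem IsClustered.mul_measure_le [MeasurableSpace G] [MeasurableAdd G] (hcl : IsClustered S A)
    (hA : MeasurableSet A) (zero_mem : 0 ∈ S) (neg_mem : ∀ s ∈ S, -s ∈ S) {κ : ℝ≥0∞}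
    (hκ : ∀ C ⊆ S, C - C ⊆ S → κ * #C ≤ #(C + S)) (μ : Measure G) [μ.IsAddRightInvariant]
    {A' : Set G} (hA' : MeasurableSet A') (hsub : A' ⊆ A) :
    κ * μ A' ≤ μ (A' + (S + S : Finset G)) := by
  refine mul_measure_le_measure_add_of_sum_le_one μ (w := clusterWeight S A)
    (fun t _ ↦ measurable_comp_clusterAt hA S fun C ↦ if t ∈ C + S then (#C : ℝ≥0∞)⁻¹ else 0)
    hA' (fun a ha ↦ ?_) fun y ↦ ?_
  · have hmem : 0 ∈ clusterAt S A a :=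
      mem_clusterAt.2 ⟨zero_mem, by simpa only [add_zero] using hsub ha⟩
    have hcard : (#(clusterAt S A a) : ℝ≥0∞) ≠ 0 :=
      Nat.cast_ne_zero.2 (Finset.card_ne_zero_of_mem hmem)
    rw [sum_clusterWeight, ← div_eq_mul_inv,
      ENNReal.le_div_iff_mul_le (.inl hcard) (.inl (ENNReal.natCast_ne_top _))]
    exact hκ _ (clusterAt_subset a) (hcl.clusterAt_sub_clusterAt_subset neg_mem a)
  · refine (Finset.sum_le_sum fun t _ ↦ ?_).trans
      (hcl.sum_indicator_clusterWeight_le_one neg_mem (S + S) y)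
    exact indicator_le_indicator_of_subset hsub (fun _ ↦ zero_le) _

end MassTransport

section Density

variable {n : ℕ} {A : Set (Fin n → ℝ)}

lemma box_eq_Icc (n : ℕ) (R : ℝ) : box n R = Icc (fun _ ↦ -R) (fun _ ↦ R) := by
  ext x
  simp only [box, mem_ofPred_eq, mem_Icc, Pi.le_def, abs_le, forall_and]

lemma measurableSet_box (n : ℕ) (R : ℝ) : MeasurableSet (box n R) :=
  box_eq_Icc n R ▸ measurableSet_Icc

lemma volume_box (n : ℕ) (R : ℝ) : volume (box n R) = ENNReal.ofReal (2 * R) ^ n := by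
  simp only [box_eq_Icc, Real.volume_Icc_pi, sub_neg_eq_add, two_mul, Finset.prod_const,
    Finset.card_univ, Fintype.card_fin]

lemma exists_box_add_subset (T : Finset (Fin n → ℝ)) : ∃ r, ∀ R, box n R + T ⊆ box n (R + r) := by
  obtain ⟨r, hr⟩ := T.finite_toSet.isBounded.exists_norm_le
  refine ⟨r, ?_⟩
  rintro R _ ⟨x, hx, t, ht, rfl⟩ i
  exact (abs_add_le _ _).trans (add_le_add (hx i) ((norm_le_pi_norm t i).trans (hr t ht)))

theorem density_le_one_div {κ r : ℝ} (hκ : 0 < κ)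
    (h : ∀ R, ENNReal.ofReal κ * volume (A ∩ box n R) ≤ volume (box n (R + r))) :
    density n A ≤ 1 / κ := by
  have ratio_le : ∀ᶠ R : ℝ in atTop, (volume (A ∩ box n R)).toReal / (volume (box n R)).toReal ≤
      1 / κ * (1 + r / R) ^ n := by
    filter_upwards [eventually_gt_atTop 0, eventually_ge_atTop (-r)] with R hR hRr
    have hvol : ∀ R : ℝ, 0 ≤ R → (volume (box n R)).toReal = (2 * R) ^ n := fun R hR ↦ by
      rw [volume_box, ENNReal.toReal_pow, ENNReal.toReal_ofReal (by positivity)]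
    have hreal := ENNReal.toReal_mono (by rw [volume_box]; finiteness) (h R)
    rw [ENNReal.toReal_mul, ENNReal.toReal_ofReal hκ.le, hvol _ (by linarith)] at hreal
    have hscale : (1 + r / R) * (2 * R) = 2 * (R + r) := by field_simp
    rw [hvol _ hR.le, div_le_iff₀ (by positivity), mul_assoc, ← mul_pow, hscale, one_div,
      inv_mul_eq_div, le_div_iff₀' hκ]
    exact hreal
  have hlim : Tendsto (fun R : ℝ ↦ 1 / κ * (1 + r / R) ^ n) atTop (nhds (1 / κ)) := by
    simpa using (((tendsto_const_nhds.div_atTop tendsto_id).const_add 1).pow n).const_mul (1 / κ)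
  refine (limsup_le_limsup ratio_le ?_ hlim.isBoundedUnder_le).trans_eq hlim.limsup_eq
  exact (isBoundedUnder_of ⟨0, fun R ↦ by positivity⟩).isCoboundedUnder_le

theorem IsClustered.density_le {S : Finset (Fin n → ℝ)} (hcl : IsClustered S A)
    (hA : MeasurableSet A) (zero_mem : 0 ∈ S) (neg_mem : ∀ s ∈ S, -s ∈ S) {κ : ℝ} (hκ : 0 < κ)
    (hcard : ∀ C ⊆ S, C - C ⊆ S → κ * #C ≤ #(C + S)) : density n A ≤ 1 / κ := by
  have hcard' : ∀ C ⊆ S, C - C ⊆ S → ENNReal.ofReal κ * #C ≤ #(C + S) := fun C hC hCC ↦ by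
    simpa only [ENNReal.ofReal_mul hκ.le, ENNReal.ofReal_natCast] using
      ENNReal.ofReal_le_ofReal (hcard C hC hCC)
  obtain ⟨r, hr⟩ := exists_box_add_subset (S + S)
  refine density_le_one_div (r := r) hκ fun R ↦ ?_
  refine (hcl.mul_measure_le hA zero_mem neg_mem hcard' volume (hA.inter (measurableSet_box n R))
    inter_subset_left).trans (measure_mono ?_)
  exact (add_subset_add_right inter_subset_right).trans (hr R)

end Density

section ShortVectors

variable {ι : Type*} [Fintype ι] [DecidableEq ι]

/-- The vertices of the cube `[-1, 1]^ι`, which are the short vectors with odd entries. -/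
def cubeVectors (ι : Type*) [Fintype ι] [DecidableEq ι] : Finset (ι → ℤ) :=
  Fintype.piFinset fun _ ↦ {-1, 1}

/-- The integer vectors `d` with entries of equal parity and `max_{i ≠ j} (|d i| + |d j|) ≤ 2`.
Divided by four, they are the vectors of norm at most `1 / 2` in half the dual lattice of `D_n`.
The bound on single entries follows from the other one when `ι` is nontrivial; it is there to make
the set finite. -/
noncomputable def shortVectors (ι : Type*) [Fintype ι] [DecidableEq ι] : Finset (ι → ℤ) :=
  {d ∈ Fintype.piFinset fun _ ↦ Finset.Icc (-2) 2 |
    (∀ i j, 2 ∣ d i - d j) ∧ ∀ i j, i ≠ j → |d i| + |d j| ≤ 2}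

/-- The short vectors with even entries: `0` and the `± 2 eₖ`. -/
noncomputable def axisVectors (ι : Type*) [Fintype ι] [DecidableEq ι] : Finset (ι → ℤ) :=
  {d ∈ shortVectors ι | ∀ i, 2 ∣ d i}

lemma mem_cubeVectors {d : ι → ℤ} : d ∈ cubeVectors ι ↔ ∀ i, d i = -1 ∨ d i = 1 := by
  simp only [cubeVectors, Fintype.mem_piFinset, Finset.mem_insert, Finset.mem_singleton]

lemma card_cubeVectors : #(cubeVectors ι) = 2 ^ Fintype.card ι := by
  simp [cubeVectors]

lemma zero_mem_shortVectors : 0 ∈ shortVectors ι := by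
  simp [shortVectors]

lemma neg_mem_shortVectors {d : ι → ℤ} (hd : d ∈ shortVectors ι) : -d ∈ shortVectors ι := by
  simp only [shortVectors, Finset.mem_filter, Fintype.mem_piFinset, Finset.mem_Icc, Pi.neg_apply,
    abs_neg] at hd ⊢
  exact ⟨fun i ↦ by have := hd.1 i; omega, fun i j ↦ by have := hd.2.1 i j; omega, hd.2.2⟩

section Nontrivial

variable [Nontrivial ι]

lemma mem_shortVectors {d : ι → ℤ} : d ∈ shortVectors ι ↔
    (∀ i j, 2 ∣ d i - d j) ∧ ∀ i j, i ≠ j → |d i| + |d j| ≤ 2 := by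
  simp only [shortVectors, Finset.mem_filter, Fintype.mem_piFinset, Finset.mem_Icc,
    and_iff_right_iff_imp]
  intro h i
  obtain ⟨j, hj⟩ := exists_ne i
  exact abs_le.1 ((le_add_of_nonneg_right (abs_nonneg (d j))).trans (h.2 i j hj.symm))

/-- For a vector `d` with entries of equal parity `|d i| + |d j|` is even, so it skips `3`. -/
lemma add_mem_shortVectors_or {u v : ι → ℤ} (hu : u ∈ shortVectors ι) (hv : v ∈ shortVectors ι) :
    u + v ∈ shortVectors ι ∨ (∀ i j, i ≠ j → |(u + v) i| + |(u + v) j| ≤ 4) ∧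
      ∃ i j, i ≠ j ∧ |(u + v) i| + |(u + v) j| = 4 := by
  rw [mem_shortVectors] at hu hv
  have parity : ∀ i j, 2 ∣ (u + v) i - (u + v) j := fun i j ↦ by
    simpa only [Pi.add_apply, add_sub_add_comm] using dvd_add (hu.1 i j) (hv.1 i j)
  have le_four : ∀ i j, i ≠ j → |(u + v) i| + |(u + v) j| ≤ 4 := fun i j hij ↦ by
    have := hu.2 i j hij
    have := hv.2 i j hij
    have := abs_add_le (u i) (v i)
    have := abs_add_le (u j) (v j)
    simp only [Pi.add_apply]
    omega
  by_cases h : ∃ i j, i ≠ j ∧ |(u + v) i| + |(u + v) j| = 4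
  · exact .inr ⟨le_four, h⟩
  · push Not at h
    refine .inl (mem_shortVectors.2 ⟨parity, fun i j hij ↦ ?_⟩)
    have := parity i j
    have := le_four i j hij
    have := h i j hij
    grind

lemma cubeVectors_subset_shortVectors : cubeVectors ι ⊆ shortVectors ι := by
  intro d hd
  rw [mem_cubeVectors] at hd
  refine mem_shortVectors.2 ⟨fun i j ↦ ?_, fun i j _ ↦ ?_⟩ <;>
  grind

lemma mem_cubeVectors_of_odd {d : ι → ℤ} (hd : d ∈ shortVectors ι) {z : ι} (hz : ¬ 2 ∣ d z) :
    d ∈ cubeVectors ι := by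
  obtain ⟨parity, short⟩ := mem_shortVectors.1 hd
  refine mem_cubeVectors.2 fun i ↦ ?_
  obtain ⟨j, hj⟩ := exists_ne i
  have := parity i z
  have := parity j z
  have := short i j hj.symm
  grind

omit [Nontrivial ι] in
lemma mem_axisVectors_of_even {d : ι → ℤ} (hd : d ∈ shortVectors ι) {z : ι} (hz : 2 ∣ d z) :
    d ∈ axisVectors ι :=
  Finset.mem_filter.2 ⟨hd, fun i ↦ (dvd_iff_dvd_of_dvd_sub
    ((Finset.mem_filter.1 hd).2.1 i z)).2 hz⟩

lemma single_mem_axisVectors (k : ι) {c : ℤ} (hc : c = 2 ∨ c = -2) :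
    Pi.single k c ∈ axisVectors ι := by
  have even : ∀ i, 2 ∣ (Pi.single k c : ι → ℤ) i := fun i ↦ by
    rcases eq_or_ne i k with rfl | hik
    · rw [Pi.single_eq_same]; omega
    · rw [Pi.single_eq_of_ne hik]; exact dvd_zero 2
  refine Finset.mem_filter.2 ⟨mem_shortVectors.2
    ⟨fun i j ↦ dvd_sub (even i) (even j), fun i j hij ↦ ?_⟩, even⟩
  grind

lemma eq_single_of_mem_axisVectors {d : ι → ℤ} (hd : d ∈ axisVectors ι) (hd0 : d ≠ 0) :
    ∃ k, d = Pi.single k 2 ∨ d = Pi.single k (-2) := by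
  obtain ⟨hd, even⟩ := Finset.mem_filter.1 hd
  have short := (mem_shortVectors.1 hd).2
  obtain ⟨k, hk⟩ := Function.ne_iff.1 hd0
  rw [Pi.zero_apply] at hk
  have off : ∀ j, j ≠ k → d j = 0 := fun j hj ↦ by
    have := even j
    have := even k
    have := short j k hj
    grind
  have at_k : d k = 2 ∨ d k = -2 := by
    obtain ⟨j, hj⟩ := exists_ne k
    have := even k
    have := short j k hj
    grind
  have eq_single : d = Pi.single k (d k) := by
    ext j
    rcases eq_or_ne j k with rfl | hj
    · rw [Pi.single_eq_same]
    · rw [Pi.single_eq_of_ne hj, off j hj]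
  exact ⟨k, at_k.imp (eq_single.trans <| congrArg _ ·) (eq_single.trans <| congrArg _ ·)⟩

lemma sum_emod_four_of_mem_axisVectors {d : ι → ℤ} (hd : d ∈ axisVectors ι) (hd0 : d ≠ 0) :
    (∑ i, d i) % 4 = 2 := by
  obtain ⟨k, rfl | rfl⟩ := eq_single_of_mem_axisVectors hd hd0 <;> simp

lemma card_le_two_of_sub_subset_axisVectors {E : Finset (ι → ℤ)} (hE : E - E ⊆ axisVectors ι) :
    #E ≤ 2 := by
  by_contra! h
  obtain ⟨a, ha, b, hb, c, hc, hab, hac, hbc⟩ := Finset.two_lt_card.1 h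
  have sum_sub : ∀ x ∈ E, ∀ y ∈ E, x ≠ y → (∑ i, x i - ∑ i, y i) % 4 = 2 :=
    fun x hx y hy hxy ↦ by
      rw [← Finset.sum_sub_distrib]
      exact sum_emod_four_of_mem_axisVectors (hE (Finset.sub_mem_sub hx hy)) (sub_ne_zero.2 hxy)
  have := sum_sub a ha b hb hab
  have := sum_sub a ha c hc hac
  have := sum_sub b hb c hc hbc
  omega

lemma eq_singleton_or_pair_of_sub_subset_axisVectors {E : Finset (ι → ℤ)}
    (hE : E - E ⊆ axisVectors ι) (hne : E.Nonempty) :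
    ∃ e k, E = {e} ∨ E = {e, e + Pi.single k 2} := by
  obtain hcard | hcard : #E = 1 ∨ #E = 2 := by
    have := card_le_two_of_sub_subset_axisVectors hE
    have := hne.card_pos
    omega
  · obtain ⟨e, rfl⟩ := Finset.card_eq_one.1 hcard
    exact ⟨e, Classical.arbitrary ι, .inl rfl⟩
  · obtain ⟨a, b, hab, rfl⟩ := Finset.card_eq_two.1 hcard
    have hsub : b - a ∈ axisVectors ι := hE (Finset.sub_mem_sub (by simp) (by simp))
    obtain ⟨k, hk | hk⟩ := eq_single_of_mem_axisVectors hsub (sub_ne_zero.2 hab.symm)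
    · exact ⟨a, k, .inr (by rw [← hk, add_sub_cancel])⟩
    · refine ⟨b, k, .inr ?_⟩
      rw [← neg_neg (Pi.single k 2), ← Pi.single_neg, ← hk, ← sub_eq_add_neg, sub_sub_cancel,
        Finset.pair_comm]

omit [Nontrivial ι] in
lemma card_pair_add_cubeVectors (e : ι → ℤ) (k : ι) :
    2 * #({e, e + Pi.single k 2} + cubeVectors ι) = 3 * 2 ^ Fintype.card ι := by
  have pair_eq : ({e, e + Pi.single k 2} : Finset (ι → ℤ)) =
      Fintype.piFinset (Function.update (fun i ↦ {e i}) k {e k, e k + 2}) := by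
    have add_single : e + Pi.single k 2 = Function.update e k (e k + 2) := by
      ext i
      rcases eq_or_ne i k with rfl | hik <;> simp [*]
    ext x
    rw [Fintype.mem_piFinset, Function.forall_update_iff (p := fun i s ↦ x i ∈ s)]
    simp only [Finset.mem_insert, Finset.mem_singleton, add_single, Function.eq_update_iff]
    grind
  have card_factor (i : ι) :
      #(Function.update (fun i ↦ ({e i} : Finset ℤ)) k {e k, e k + 2} i + {-1, 1}) =
        Function.update (fun _ ↦ 2) k 3 i := by
    rcases eq_or_ne i k with rfl | hik
    · have : ({e i, e i + 2} : Finset ℤ) + {-1, 1} = {e i - 1, e i + 1, e i + 3} := by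
        ext; simp [Finset.mem_add]; grind
      rw [Function.update_self, Function.update_self, this]
      exact Finset.card_eq_three.2 ⟨_, _, _, by omega, by omega, by omega, rfl⟩
    · simp [hik, Finset.singleton_add]
  rw [pair_eq, cubeVectors, ← Fintype.piFinset_add, Fintype.card_piFinset]
  simp only [card_factor, Finset.prod_update_of_mem (Finset.mem_univ k), Finset.prod_const,
    ← Finset.compl_eq_univ_sdiff, Finset.card_compl, Finset.card_singleton]
  rw [mul_left_comm, ← pow_succ', Nat.sub_add_cancel (Fintype.card_pos_iff.2 ⟨k⟩)]

lemma three_mul_card_le_card_add_cubeVectors {E : Finset (ι → ℤ)} (hE : E - E ⊆ axisVectors ι) :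
    3 * 2 ^ Fintype.card ι * #E ≤ 4 * #(E + cubeVectors ι) := by
  rcases E.eq_empty_or_nonempty with rfl | hne
  · simp
  obtain ⟨e, k, rfl | rfl⟩ := eq_singleton_or_pair_of_sub_subset_axisVectors hE hne
  · rw [Finset.card_singleton_add, card_cubeVectors, Finset.card_singleton]
    omega
  · have := card_pair_add_cubeVectors e k
    have := Nat.mul_le_mul_left (3 * 2 ^ Fintype.card ι)
      (card_le_two_of_sub_subset_axisVectors hE)
    omega

omit [Nontrivial ι] in
lemma odd_of_mem_cubeVectors {d : ι → ℤ} (hd : d ∈ cubeVectors ι) (z : ι) : ¬ 2 ∣ d z := by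
  have := mem_cubeVectors.1 hd z
  omega

/-- Moving `e` to distance three from `o` along an axis other than `k` leaves the unit cubes around
the points of `O`, which agree with `o` along that axis. -/
lemma card_mul_le_card_add_axisVectors_sdiff {E O : Finset (ι → ℤ)} {o : ι → ℤ} {k : ι}
    (hE : ∀ e ∈ E, e - o ∈ cubeVectors ι) (hO : ∀ o' ∈ O, ∀ j ≠ k, o' j = o j) :
    #E * (Fintype.card ι - 1) ≤ #((E + axisVectors ι) \ (O + cubeVectors ι)) := by
  simp only [mem_cubeVectors, Pi.sub_apply] at hE
  rw [← Finset.card_univ, ← Finset.card_erase_of_mem (Finset.mem_univ k), ← Finset.card_product]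
  refine Finset.card_le_card_of_injOn (fun p ↦ p.1 + Pi.single p.2 (2 * (p.1 p.2 - o p.2))) ?_ ?_
  · rintro ⟨e, j⟩ hp
    obtain ⟨he, hj⟩ := Finset.mem_product.1 hp
    have hej := hE e he j
    have hstep : 2 * (e j - o j) = 2 ∨ 2 * (e j - o j) = -2 := by omega
    refine Finset.mem_sdiff.2 ⟨Finset.add_mem_add he (single_mem_axisVectors j hstep), ?_⟩
    rw [Finset.mem_add]
    rintro ⟨o', ho', q, hq, heq⟩
    have hqj := mem_cubeVectors.1 hq j
    have hoj := hO o' ho' j (Finset.ne_of_mem_erase hj)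
    have heqj := congrFun heq j
    simp only [Pi.add_apply, Pi.single_eq_same] at heqj
    omega
  · rintro ⟨e, j⟩ hp ⟨e', j'⟩ hp' heq
    obtain rfl : j = j' := by
      by_contra hjj
      have := hE e (Finset.mem_product.1 hp).1 j
      have := hE e' (Finset.mem_product.1 hp').1 j
      have heqj := congrFun heq j
      simp only [Pi.add_apply, Pi.single_eq_same, Pi.single_eq_of_ne hjj] at heqj
      omega
    have hj : e j = e' j := by
      have heqj := congrFun heq j
      simp only [Pi.add_apply, Pi.single_eq_same] at heqj
      omega
    simp only [hj, add_left_inj] at heq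
    rw [heq]

lemma exists_center_of_sub_subset {E O : Finset (ι → ℤ)} (hE : E - E ⊆ axisVectors ι)
    (hO : O - O ⊆ axisVectors ι) (hEO : E - O ⊆ cubeVectors ι) :
    ∃ (o : ι → ℤ) (k : ι), (∀ e ∈ E, e - o ∈ cubeVectors ι) ∧ ∀ o' ∈ O, ∀ j ≠ k, o' j = o j := by
  rcases O.eq_empty_or_nonempty with rfl | hOne
  · rcases E.eq_empty_or_nonempty with rfl | hEne
    · exact ⟨0, Classical.arbitrary ι, by simp, by simp⟩
    obtain ⟨e, k, rfl | rfl⟩ := eq_singleton_or_pair_of_sub_subset_axisVectors hE hEne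
    · exact ⟨e + 1, k, by simp [mem_cubeVectors], by simp⟩
    · refine ⟨e + 1, k, ?_, by simp⟩
      simp only [Finset.mem_insert, Finset.mem_singleton, mem_cubeVectors]
      rintro _ (rfl | rfl) i
      · simp
      · rcases eq_or_ne i k with rfl | hik <;> simp [*]
  · obtain ⟨o, k, hok⟩ := eq_singleton_or_pair_of_sub_subset_axisVectors hO hOne
    have ho : o ∈ O := by rcases hok with rfl | rfl <;> simp
    refine ⟨o, k, fun e he ↦ hEO (Finset.sub_mem_sub he ho), fun o' ho' j hj ↦ ?_⟩
    have : o' = o ∨ o' = o + Pi.single k 2 := by rcases hok with rfl | rfl <;> simp_all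
    rcases this with rfl | rfl <;> simp [hj]

lemma card_add_card_le_card_union {E O : Finset (ι → ℤ)} (hE : E - E ⊆ axisVectors ι)
    (hO : O - O ⊆ axisVectors ι) (hEO : E - O ⊆ cubeVectors ι) :
    3 * 2 ^ Fintype.card ι * #O + 4 * (Fintype.card ι - 1) * #E ≤
      4 * #((E + axisVectors ι) ∪ (O + cubeVectors ι)) := by
  obtain ⟨o, k, hoE, hoO⟩ := exists_center_of_sub_subset hE hO hEO
  have cube := three_mul_card_le_card_add_cubeVectors hO
  have axis := card_mul_le_card_add_axisVectors_sdiff hoE hoO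
  rw [← Finset.card_sdiff_add_card]
  linarith

lemma card_filter_dvd_le_card_filter_dvd_add_shortVectors {C : Finset (ι → ℤ)}
    (hC : C - C ⊆ shortVectors ι) (z : ι) (r : ℤ) :
    3 * 2 ^ Fintype.card ι * #{c ∈ C | ¬ 2 ∣ c z - r} +
        4 * (Fintype.card ι - 1) * #{c ∈ C | 2 ∣ c z - r} ≤
      4 * #{x ∈ C + shortVectors ι | 2 ∣ x z - r} := by
  have sub_axis : ∀ P ⊆ C, (∀ a ∈ P, ∀ b ∈ P, 2 ∣ a z - b z) → P - P ⊆ axisVectors ι :=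
    fun P hPC hP ↦ Finset.sub_subset_iff.2 fun a ha b hb ↦
      mem_axisVectors_of_even (hC (Finset.sub_mem_sub (hPC ha) (hPC hb))) (hP a ha b hb)
  have even_sub : ({c ∈ C | 2 ∣ c z - r} - {c ∈ C | 2 ∣ c z - r} : Finset _) ⊆ axisVectors ι :=
    sub_axis _ (Finset.filter_subset _ _) (by grind)
  have odd_sub : ({c ∈ C | ¬ 2 ∣ c z - r} - {c ∈ C | ¬ 2 ∣ c z - r} : Finset _) ⊆ axisVectors ι :=
    sub_axis _ (Finset.filter_subset _ _) (by grind)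
  have mixed_sub : ({c ∈ C | 2 ∣ c z - r} - {c ∈ C | ¬ 2 ∣ c z - r} : Finset _) ⊆ cubeVectors ι :=
    Finset.sub_subset_iff.2 fun a ha b hb ↦ by
      rw [Finset.mem_filter] at ha hb
      refine mem_cubeVectors_of_odd (hC (Finset.sub_mem_sub ha.1 hb.1)) (z := z) ?_
      rw [Pi.sub_apply]
      omega
  refine (card_add_card_le_card_union even_sub odd_sub mixed_sub).trans
    (Nat.mul_le_mul_left 4 (Finset.card_le_card (Finset.union_subset ?_ ?_))) <;>
  refine Finset.add_subset_iff.2 fun c hc d hd ↦ ?_ <;>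
  rw [Finset.mem_filter] at hc ⊢
  · have hd' := Finset.mem_filter.1 hd
    refine ⟨Finset.add_mem_add hc.1 hd'.1, ?_⟩
    rw [Pi.add_apply, add_sub_right_comm]
    exact dvd_add hc.2 (hd'.2 z)
  · refine ⟨Finset.add_mem_add hc.1 (cubeVectors_subset_shortVectors hd), ?_⟩
    have := odd_of_mem_cubeVectors hd z
    rw [Pi.add_apply]
    omega

theorem mul_card_le_card_add_shortVectors {C : Finset (ι → ℤ)} (hC : C - C ⊆ shortVectors ι) :
    (3 * 2 ^ Fintype.card ι + 4 * (Fintype.card ι - 1)) * #C ≤ 4 * #(C + shortVectors ι) := by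
  let z : ι := Classical.arbitrary ι
  have even := card_filter_dvd_le_card_filter_dvd_add_shortVectors hC z 0
  have odd := card_filter_dvd_le_card_filter_dvd_add_shortVectors hC z 1
  have dvd_sub_one : ∀ a : ℤ, 2 ∣ a - 1 ↔ ¬ 2 ∣ a := fun a ↦ by omega
  simp only [sub_zero, dvd_sub_one, not_not] at even odd
  rw [← Finset.card_filter_add_card_filter_not (s := C) (2 ∣ · z),
    ← Finset.card_filter_add_card_filter_not (s := C + shortVectors ι) (2 ∣ · z)]
  linarith

end Nontrivial

end ShortVectors

section DnNorm

variable {n : ℕ}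

lemma DnNorm_eq {x : Fin n → ℝ} {r : ℝ} (hle : ∀ i j, i ≠ j → |x i| + |x j| ≤ r)
    (hex : ∃ i j, i ≠ j ∧ |x i| + |x j| = r) : DnNorm n x = r := by
  obtain ⟨i, j, hij, rfl⟩ := hex
  exact IsGreatest.csSup_eq
    ⟨⟨i, j, hij, rfl⟩, by rintro _ ⟨i', j', hij', rfl⟩; exact hle i' j' hij'⟩

/-- The scaling `z ↦ z / 4`, which takes the integer vectors with entries of equal parity onto half
the dual lattice of `D_n`. -/
noncomputable def quarter (n : ℕ) : (Fin n → ℤ) →+ (Fin n → ℝ) where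
  toFun z i := z i / 4
  map_zero' := by ext; simp
  map_add' z w := by ext; simp [add_div]

lemma quarter_injective : Function.Injective (quarter n) := by
  intro z w h
  ext i
  have := congrFun h i
  simpa [quarter] using this

lemma DnNorm_quarter_eq_one {z : Fin n → ℤ} (hle : ∀ i j, i ≠ j → |z i| + |z j| ≤ 4)
    (hex : ∃ i j, i ≠ j ∧ |z i| + |z j| = 4) : DnNorm n (quarter n z) = 1 := by
  have abs_add_abs : ∀ i j, |quarter n z i| + |quarter n z j| = ((|z i| + |z j| : ℤ) : ℝ) / 4 :=
    fun i j ↦ by simp [quarter, abs_div, add_div]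
  refine DnNorm_eq (fun i j hij ↦ ?_) ?_
  · have : ((|z i| + |z j| : ℤ) : ℝ) ≤ 4 := mod_cast hle i j hij
    rw [abs_add_abs]
    linarith
  · obtain ⟨i, j, hij, h⟩ := hex
    exact ⟨i, j, hij, by rw [abs_add_abs, h]; norm_num⟩

variable [Nontrivial (Fin n)]

theorem isClustered_of_avoidsOne_DnNorm {A : Set (Fin n → ℝ)} (hA : AvoidsOne n (DnNorm n) A) :
    IsClustered ((shortVectors (Fin n)).image (quarter n)) A := by
  intro a ha b hb hab
  rw [← Finset.image_add] at hab
  obtain ⟨_, huv, heq⟩ := Finset.mem_image.1 hab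
  obtain ⟨u, hu, v, hv, rfl⟩ := Finset.mem_add.1 huv
  rw [← heq]
  rcases add_mem_shortVectors_or hu hv with h | ⟨hle, hex⟩
  · exact Finset.mem_image_of_mem _ h
  · exact absurd (heq ▸ DnNorm_quarter_eq_one hle hex) (hA a ha b hb)

theorem mul_card_le_card_add_image_quarter {C : Finset (Fin n → ℝ)}
    (hC : C ⊆ (shortVectors (Fin n)).image (quarter n))
    (hCC : C - C ⊆ (shortVectors (Fin n)).image (quarter n)) :
    ((3 / 4) * 2 ^ n + (n : ℝ) - 1) * #C ≤ #(C + (shortVectors (Fin n)).image (quarter n)) := by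
  obtain ⟨C, -, rfl⟩ := Finset.subset_image_iff.1 hC
  have image_sub : (C - C).image (quarter n) = C.image (quarter n) - C.image (quarter n) :=
    Finset.image_image₂_distrib (map_sub (quarter n))
  rw [← image_sub, Finset.image_subset_image_iff quarter_injective] at hCC
  rw [← Finset.image_add, Finset.card_image_of_injective _ quarter_injective,
    Finset.card_image_of_injective _ quarter_injective]
  have hn : 1 ≤ n := (Fin.nontrivial_iff_two_le.1 ‹_›).trans' one_le_two
  have hcard : ((_ : ℕ) : ℝ) ≤ (_ : ℕ) := Nat.cast_le.2 (mul_card_le_card_add_shortVectors hCC)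
  push_cast [Fintype.card_fin, Nat.cast_sub hn] at hcard
  linarith

end DnNorm

theorem m1_voronoi_Dn_upper_bound_general (n : ℕ) (hn : 2 ≤ n) :
    m1 n (DnNorm n) ≤ 1 / ((3 / 4) * 2 ^ n + (n : ℝ) - 1) := by
  have : Nontrivial (Fin n) := Fin.nontrivial_iff_two_le.2 hn
  have hκ : 0 < (3 / 4) * 2 ^ n + (n : ℝ) - 1 := by
    have : (2 : ℝ) ≤ n := mod_cast hn
    have : (0 : ℝ) < 2 ^ n := by positivity
    linarith
  refine Real.sSup_le ?_ (one_div_pos.2 hκ).le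
  rintro _ ⟨A, hA, havoid, rfl⟩
  refine (isClustered_of_avoidsOne_DnNorm havoid).density_le hA ?_ ?_ hκ
    fun C ↦ mul_card_le_card_add_image_quarter
  · exact Finset.mem_image.2 ⟨0, zero_mem_shortVectors, map_zero _⟩
  · simp only [Finset.forall_mem_image, ← map_neg]
    exact fun z hz ↦ Finset.mem_image_of_mem _ (neg_mem_shortVectors hz)

theorem m1_voronoi_Dn_upper_bound (n : ℕ) (hn : 4 ≤ n) :
    m1 n (DnNorm n) ≤ 1 / ((3 / 4) * 2 ^ n + (n : ℝ) - 1) :=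
  m1_voronoi_Dn_upper_bound_general n (by omega)
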